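/- Lower bound on the sensing rate: with X Bernoulli-Gaussian BG(μ_T, σ_T², γ) and Y = √s X + Z (Z ~ CN(0,1)), for any binary detector Ŷ = g(Y) with error probabilities P_FA, P_MD, I(X; Y) ≥ H_b(γ) - H_NP(γ, P_FA, P_MD) + γ log₂(1 + s σ_T²). -/

import Mathlib

open Real MeasureTheory

/-- Binary entropy function (in bits), with the convention `0 log 0 = 0`. -/
noncomputable def binEnt (p : ℝ) : ℝ := -(p * Real.logb 2 p) - (1 - p) * Real.logb 2 (1 - p)

/-- `H_NP(γ, P_FA, P_MD)`: the remaining target-location uncertainty after detection. -/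
noncomputable def HNP (γ pFA pMD : ℝ) : ℝ :=
  binEnt γ + (1 - γ) * binEnt pFA + γ * binEnt pMD
    - binEnt ((1 - γ) * pFA + γ * (1 - pMD))

/-- The density of a circularly symmetric complex Gaussian with mean `m` and variance `w`. -/
noncomputable def complexGaussianPDF (m : ℂ) (w : ℝ) (y : ℂ) : ℝ :=
  1 / (π * w) * Real.exp (-‖y - m‖ ^ 2 / w)

lemma complexGaussianPDF_pos (m : ℂ) {w : ℝ} (hw : 0 < w) (y : ℂ) :
    0 < complexGaussianPDF m w y := by
  unfold complexGaussianPDF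
  positivity

lemma integral_complexGaussianPDF (m : ℂ) {w : ℝ} (hw : 0 < w) :
    ∫ y, complexGaussianPDF m w y = 1 := by
  have h := Complex.integral_exp_neg_mul_rpow (p := 2) (b := w⁻¹) (by norm_num) (by positivity)
  have hG : Real.Gamma (2 / 2 + 1) = 1 := by
    rw [show (2 / 2 + 1 : ℝ) = 2 by norm_num]; exact Real.Gamma_two
  rw [hG, show (-2 / 2 : ℝ) = -1 by norm_num, Real.rpow_neg_one, inv_inv] at h
  unfold complexGaussianPDF
  rw [integral_sub_right_eq_self (fun y : ℂ => 1 / (π * w) * Real.exp (-‖y‖ ^ 2 / w)) m,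
    integral_const_mul]
  have e : (fun y : ℂ => Real.exp (-‖y‖ ^ 2 / w)) =
      fun y : ℂ => Real.exp (-w⁻¹ * ‖y‖ ^ (2 : ℝ)) := by
    ext y
    rw [Real.rpow_two]
    congr 1
    ring
  rw [e, h]
  field_simp

lemma integral_norm_sq_mul_complexGaussianPDF (m : ℂ) {w : ℝ} (hw : 0 < w) :
    ∫ y, ‖y - m‖ ^ 2 * complexGaussianPDF m w y = w := by
  have h := Complex.integral_rpow_mul_exp_neg_mul_rpow (p := 2) (q := 2) (b := w⁻¹)
    (by norm_num) (by norm_num) (by positivity)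
  have hG : Real.Gamma ((2 + 2) / 2) = 1 := by
    rw [show ((2 + 2) / 2 : ℝ) = 2 by norm_num]; exact Real.Gamma_two
  rw [hG, show (-(2 + 2) / 2 : ℝ) = -2 by norm_num, Real.rpow_neg (by positivity),
    Real.rpow_two] at h
  unfold complexGaussianPDF
  rw [integral_sub_right_eq_self
    (fun y : ℂ => ‖y‖ ^ 2 * (1 / (π * w) * Real.exp (-‖y‖ ^ 2 / w))) m]
  have e : (fun y : ℂ => ‖y‖ ^ 2 * (1 / (π * w) * Real.exp (-‖y‖ ^ 2 / w))) =
      fun y : ℂ => 1 / (π * w) * (‖y‖ ^ (2 : ℝ) * Real.exp (-w⁻¹ * ‖y‖ ^ (2 : ℝ))) := by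
    ext y
    rw [Real.rpow_two, show -‖y‖ ^ 2 / w = -w⁻¹ * ‖y‖ ^ 2 by ring]
    ring
  rw [e, integral_const_mul, h]
  field_simp

lemma integrable_complexGaussianPDF (m : ℂ) {w : ℝ} (hw : 0 < w) :
    Integrable (complexGaussianPDF m w) :=
  Integrable.of_integral_ne_zero (by rw [integral_complexGaussianPDF m hw]; exact one_ne_zero)

lemma integrable_norm_sq_mul_complexGaussianPDF (m : ℂ) {w : ℝ} (hw : 0 < w) :
    Integrable (fun y => ‖y - m‖ ^ 2 * complexGaussianPDF m w y) :=
  Integrable.of_integral_ne_zero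
    (by rw [integral_norm_sq_mul_complexGaussianPDF m hw]; exact hw.ne')

lemma complexGaussianPDF_mul_logb (m : ℂ) {w : ℝ} (hw : 0 < w) (y : ℂ) :
    complexGaussianPDF m w y * logb 2 (complexGaussianPDF m w y) =
      -logb 2 (π * w) * complexGaussianPDF m w y +
        -(1 / (w * Real.log 2)) * (‖y - m‖ ^ 2 * complexGaussianPDF m w y) := by
  have h : logb 2 (complexGaussianPDF m w y) =
      -logb 2 (π * w) + -(1 / (w * Real.log 2)) * ‖y - m‖ ^ 2 := by
    unfold complexGaussianPDF
    rw [logb_mul (by positivity) (Real.exp_pos _).ne', one_div, logb_inv]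
    congr 1
    rw [logb, Real.log_exp]
    field_simp
  rw [h]
  ring

lemma integrable_complexGaussianPDF_mul_logb (m : ℂ) {w : ℝ} (hw : 0 < w) :
    Integrable (fun y => complexGaussianPDF m w y * logb 2 (complexGaussianPDF m w y)) := by
  simp_rw [complexGaussianPDF_mul_logb m hw]
  exact ((integrable_complexGaussianPDF m hw).const_mul _).add
    ((integrable_norm_sq_mul_complexGaussianPDF m hw).const_mul _)

/-- The differential entropy of a complex Gaussian, in bits. -/
lemma integral_complexGaussianPDF_mul_logb (m : ℂ) {w : ℝ} (hw : 0 < w) :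
    ∫ y, complexGaussianPDF m w y * logb 2 (complexGaussianPDF m w y) =
      -(logb 2 (π * Real.exp 1) + logb 2 w) := by
  simp_rw [complexGaussianPDF_mul_logb m hw]
  rw [integral_add ((integrable_complexGaussianPDF m hw).const_mul _)
    ((integrable_norm_sq_mul_complexGaussianPDF m hw).const_mul _), integral_const_mul,
    integral_const_mul, integral_complexGaussianPDF m hw,
    integral_norm_sq_mul_complexGaussianPDF m hw, logb_mul pi_ne_zero hw.ne',
    logb_mul pi_ne_zero (Real.exp_pos 1).ne']
  have h : logb 2 (Real.exp 1) = 1 / Real.log 2 := by rw [logb, Real.log_exp]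
  rw [h]
  field_simp
  ring

section LogSum

variable {α : Type*} [MeasurableSpace α] {ν : Measure α} {f h : α → ℝ}

/-- A linear lower bound for the divergence integrand, tangent where `f = c * h`. -/
lemma integral_mul_logb_div_ge (hf : ∀ y, 0 < f y) (hh : ∀ y, 0 < h y)
    (hfi : Integrable f ν) (hhi : Integrable h ν)
    (hi : Integrable (fun y => f y * logb 2 (f y / h y)) ν) {c : ℝ} (hc : 0 < c) :
    (∫ y, f y ∂ν) * logb 2 c + ((∫ y, f y ∂ν) - c * ∫ y, h y ∂ν) / Real.log 2 ≤
      ∫ y, f y * logb 2 (f y / h y) ∂ν := by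
  have hl : 0 < Real.log 2 := Real.log_pos one_lt_two
  have hlin : Integrable (fun y => (f y - c * h y) / Real.log 2) ν :=
    (hfi.sub (hhi.const_mul c)).div_const _
  have e : (∫ y, f y ∂ν) * logb 2 c + ((∫ y, f y ∂ν) - c * ∫ y, h y ∂ν) / Real.log 2 =
      ∫ y, f y * logb 2 c + (f y - c * h y) / Real.log 2 ∂ν := by
    rw [integral_add (hfi.mul_const _) hlin, integral_mul_const, integral_div,
      integral_sub hfi (hhi.const_mul c), integral_const_mul]
  rw [e]
  refine integral_mono ((hfi.mul_const _).add hlin) hi fun y => ?_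
  have h1 := hf y
  have h2 := hh y
  have key := Real.one_sub_inv_le_log_of_pos (x := f y / h y / c) (by positivity)
  rw [Real.log_div (by positivity) hc.ne'] at key
  have key2 := mul_le_mul_of_nonneg_left key h1.le
  have e2 : f y * (1 - (f y / h y / c)⁻¹) = f y - c * h y := by field_simp
  rw [e2] at key2
  simp only [logb]
  rw [mul_div_assoc', mul_div_assoc', ← add_div]
  gcongr
  linarith

/-- The log-sum inequality for integrals. -/
lemma log_sum_inequality (hf : ∀ y, 0 < f y) (hh : ∀ y, 0 < h y)
    (hfi : Integrable f ν) (hhi : Integrable h ν)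
    (hi : Integrable (fun y => f y * logb 2 (f y / h y)) ν) :
    (∫ y, f y ∂ν) * logb 2 ((∫ y, f y ∂ν) / ∫ y, h y ∂ν) ≤
      ∫ y, f y * logb 2 (f y / h y) ∂ν := by
  rcases eq_or_ne ν 0 with rfl | hν
  · simp
  have pos : ∀ {k : α → ℝ}, (∀ y, 0 < k y) → Integrable k ν → 0 < ∫ y, k y ∂ν := by
    intro k hk hki
    rw [integral_pos_iff_support_of_nonneg (fun y => (hk y).le) hki,
      Function.support_eq_univ fun y => (hk y).ne']
    exact Measure.measure_univ_pos.mpr hν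
  have hP := pos hf hfi
  have hQ := pos hh hhi
  have key := integral_mul_logb_div_ge hf hh hfi hhi hi (div_pos hP hQ)
  rwa [div_mul_cancel₀ _ hQ.ne', sub_self, zero_div, add_zero] at key

end LogSum

lemma mul_logb_div_of_imp {a q : ℝ} (h : q = 0 → a = 0) :
    a * logb 2 (a / q) = a * logb 2 a - a * logb 2 q := by
  rcases eq_or_ne a 0 with rfl | ha
  · simp
  · rw [logb_div ha (mt h ha)]
    ring

/-- The mutual information of a binary asymmetric channel, as a mixture of divergences. -/
lemma binEnt_sub_HNP {γ a b : ℝ} (hγ0 : 0 < γ) (hγ1 : γ < 1)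
    (ha0 : 0 ≤ a) (ha1 : a ≤ 1) (hb0 : 0 ≤ b) (hb1 : b ≤ 1) :
    binEnt γ - HNP γ a b =
      (1 - γ) * (a * logb 2 (a / ((1 - γ) * a + γ * (1 - b))) +
        (1 - a) * logb 2 ((1 - a) / ((1 - γ) * (1 - a) + γ * b))) +
      γ * ((1 - b) * logb 2 ((1 - b) / ((1 - γ) * a + γ * (1 - b))) +
        b * logb 2 (b / ((1 - γ) * (1 - a) + γ * b))) := by
  have zero_of_mix : ∀ {x y : ℝ}, 0 ≤ x → 0 ≤ y → (1 - γ) * x + γ * y = 0 → x = 0 ∧ y = 0 := by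
    intro x y hx hy h
    have h1 := mul_nonneg (sub_pos.2 hγ1).le hx
    have h2 := mul_nonneg hγ0.le hy
    exact ⟨(mul_eq_zero.1 (by linarith : (1 - γ) * x = 0)).resolve_left (sub_pos.2 hγ1).ne',
      (mul_eq_zero.1 (by linarith : γ * y = 0)).resolve_left hγ0.ne'⟩
  have ha' : 0 ≤ 1 - a := sub_nonneg.2 ha1
  have hb' : 0 ≤ 1 - b := sub_nonneg.2 hb1
  rw [mul_logb_div_of_imp fun h => (zero_of_mix ha0 hb' h).1,
    mul_logb_div_of_imp fun h => (zero_of_mix ha' hb0 h).1,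
    mul_logb_div_of_imp fun h => (zero_of_mix ha0 hb' h).2,
    mul_logb_div_of_imp fun h => (zero_of_mix ha' hb0 h).2]
  unfold HNP binEnt
  rw [show 1 - ((1 - γ) * a + γ * (1 - b)) = (1 - γ) * (1 - a) + γ * b by ring]
  ring

/-- The chain rule `h(Y) = I(U;Y) + h(Y|U)` for a two-component mixture of densities. -/
lemma integral_mixture_mul_logb {α : Type*} [MeasurableSpace α] {ν : Measure α} {γ : ℝ}
    {f₀ f₁ fY : α → ℝ} (h0 : ∀ y, 0 < f₀ y) (h1 : ∀ y, 0 < f₁ y) (hY : ∀ y, 0 < fY y)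
    (hmix : ∀ y, fY y = (1 - γ) * f₀ y + γ * f₁ y)
    (hE0 : Integrable (fun y => f₀ y * logb 2 (f₀ y)) ν)
    (hE1 : Integrable (fun y => f₁ y * logb 2 (f₁ y)) ν)
    (hD0 : Integrable (fun y => f₀ y * logb 2 (f₀ y / fY y)) ν)
    (hD1 : Integrable (fun y => f₁ y * logb 2 (f₁ y / fY y)) ν) :
    ∫ y, fY y * logb 2 (fY y) ∂ν =
      (1 - γ) * (∫ y, f₀ y * logb 2 (f₀ y) ∂ν - ∫ y, f₀ y * logb 2 (f₀ y / fY y) ∂ν) +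
      γ * (∫ y, f₁ y * logb 2 (f₁ y) ∂ν - ∫ y, f₁ y * logb 2 (f₁ y / fY y) ∂ν) := by
  have hI0 : Integrable
      (fun y => (1 - γ) * (f₀ y * logb 2 (f₀ y) - f₀ y * logb 2 (f₀ y / fY y))) ν :=
    (hE0.sub hD0).const_mul _
  have hI1 : Integrable
      (fun y => γ * (f₁ y * logb 2 (f₁ y) - f₁ y * logb 2 (f₁ y / fY y))) ν :=
    (hE1.sub hD1).const_mul _
  rw [← integral_sub hE0 hD0, ← integral_sub hE1 hD1, ← integral_const_mul,
    ← integral_const_mul, ← integral_add hI0 hI1]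
  congr 1
  ext y
  rw [logb_div (h0 y).ne' (hY y).ne', logb_div (h1 y).ne' (hY y).ne']
  linear_combination logb 2 (fY y) * hmix y

/-- Data processing for the divergence under a binary quantizer. -/
lemma divergence_ge_of_measurableSet {α : Type*} [MeasurableSpace α] {ν : Measure α}
    {f h : α → ℝ} (hf : ∀ y, 0 < f y) (hh : ∀ y, 0 < h y)
    (hfi : Integrable f ν) (hhi : Integrable h ν)
    (hi : Integrable (fun y => f y * logb 2 (f y / h y)) ν)
    {S : Set α} (hS : MeasurableSet S) :
    (∫ y in S, f y ∂ν) * logb 2 ((∫ y in S, f y ∂ν) / ∫ y in S, h y ∂ν) +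
      (∫ y in Sᶜ, f y ∂ν) * logb 2 ((∫ y in Sᶜ, f y ∂ν) / ∫ y in Sᶜ, h y ∂ν) ≤
      ∫ y, f y * logb 2 (f y / h y) ∂ν := by
  rw [← integral_add_compl hS hi]
  exact add_le_add
    (log_sum_inequality hf hh hfi.integrableOn hhi.integrableOn hi.integrableOn)
    (log_sum_inequality hf hh hfi.integrableOn hhi.integrableOn hi.integrableOn)

/-- Lower bound on the sensing rate. With `X` Bernoulli-Gaussian `BG(μ, v, γ)` and
`Y = √s X + Z` (`Z ~ CN(0,1)`), the output density is the mixture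
`f_Y = (1-γ)f₀ + γf₁` with `f₀(y) = (1/π)e^{-|y|²}` and
`f₁(y) = (1/(π(sv+1)))e^{-|y-√s μ|²/(sv+1)}`; since `h(Y|X) = log₂(πe)`,
`I(X;Y) = -∫ f_Y log₂ f_Y - log₂(πe)`. For any measurable binary detector `g` with
false-alarm probability `P_FA = ∫_{g = 1} f₀` and misdetection probability
`P_MD = ∫_{g = 0} f₁`, we have
`I(X;Y) ≥ H_b(γ) - H_NP(γ, P_FA, P_MD) + γ log₂(1 + s v)`. -/
theorem sensing_rate_lower_bound (γ s v : ℝ) (μ : ℂ)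
    (hγ0 : 0 < γ) (hγ1 : γ < 1) (hs : 0 < s) (hv : 0 ≤ v)
    (f0 f1 fY : ℂ → ℝ)
    (hf0 : f0 = fun y => (1 / Real.pi) * Real.exp (-‖y‖ ^ 2))
    (hf1 : f1 = fun y => (1 / (Real.pi * (s * v + 1))) *
        Real.exp (-‖y - (Real.sqrt s : ℂ) * μ‖ ^ 2 / (s * v + 1)))
    (hfY : fY = fun y => (1 - γ) * f0 y + γ * f1 y)
    (hIntY : Integrable (fun y => fY y * Real.logb 2 (fY y)))
    (hInt0 : Integrable (fun y => f0 y * Real.logb 2 (f0 y / fY y)))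
    (hInt1 : Integrable (fun y => f1 y * Real.logb 2 (f1 y / fY y)))
    (g : ℂ → Bool) (hg : Measurable g) :
    (-∫ y : ℂ, fY y * Real.logb 2 (fY y)) - Real.logb 2 (Real.pi * Real.exp 1) ≥
      binEnt γ -
        HNP γ (∫ y in {y | g y = true}, f0 y) (∫ y in {y | g y = false}, f1 y) +
        γ * Real.logb 2 (1 + s * v) := by
  have hw : 0 < s * v + 1 := by positivity
  replace hf0 : f0 = complexGaussianPDF 0 1 := by
    rw [hf0]
    ext y
    simp [complexGaussianPDF]
  replace hf1 : f1 = complexGaussianPDF (Real.sqrt s * μ) (s * v + 1) := hf1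
  have p0 : ∀ y, 0 < f0 y := by rw [hf0]; exact complexGaussianPDF_pos _ one_pos
  have p1 : ∀ y, 0 < f1 y := by rw [hf1]; exact complexGaussianPDF_pos _ hw
  have i0 : Integrable f0 := by rw [hf0]; exact integrable_complexGaussianPDF _ one_pos
  have i1 : Integrable f1 := by rw [hf1]; exact integrable_complexGaussianPDF _ hw
  have hmix : ∀ y, fY y = (1 - γ) * f0 y + γ * f1 y := fun y => by rw [hfY]
  have pY : ∀ y, 0 < fY y := fun y => by
    rw [hmix]
    exact add_pos (mul_pos (sub_pos.2 hγ1) (p0 y)) (mul_pos hγ0 (p1 y))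
  have iY : Integrable fY := by
    rw [hfY]
    exact (i0.const_mul _).add (i1.const_mul _)
  have one0 : ∫ y, f0 y = 1 := by rw [hf0]; exact integral_complexGaussianPDF _ one_pos
  have one1 : ∫ y, f1 y = 1 := by rw [hf1]; exact integral_complexGaussianPDF _ hw
  have chain := integral_mixture_mul_logb p0 p1 pY hmix
    (by rw [hf0]; exact integrable_complexGaussianPDF_mul_logb _ one_pos)
    (by rw [hf1]; exact integrable_complexGaussianPDF_mul_logb _ hw) hInt0 hInt1
  have ent0 : ∫ y, f0 y * logb 2 (f0 y) = -logb 2 (π * Real.exp 1) := by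
    rw [hf0, integral_complexGaussianPDF_mul_logb _ one_pos, logb_one, add_zero]
  have ent1 : ∫ y, f1 y * logb 2 (f1 y) =
      -(logb 2 (π * Real.exp 1) + logb 2 (1 + s * v)) := by
    rw [hf1, integral_complexGaussianPDF_mul_logb _ hw, add_comm 1 (s * v)]
  have hS : MeasurableSet {y | g y = true} := hg (measurableSet_singleton true)
  have hc : {y | g y = false} = {y | g y = true}ᶜ := by
    ext y
    simp
  rw [hc]
  set S := {y | g y = true}
  have mixS : ∀ T : Set ℂ,
      ∫ y in T, fY y = (1 - γ) * (∫ y in T, f0 y) + γ * ∫ y in T, f1 y := fun T => by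
    simp_rw [hmix]
    rw [integral_add (i0.integrableOn.const_mul _) (i1.integrableOn.const_mul _),
      integral_const_mul, integral_const_mul]
  have compl0 : ∫ y in Sᶜ, f0 y = 1 - ∫ y in S, f0 y := by
    rw [← one0, ← integral_add_compl hS i0]
    ring
  have compl1 : ∫ y in S, f1 y = 1 - ∫ y in Sᶜ, f1 y := by
    rw [← one1, ← integral_add_compl hS i1]
    ring
  have nonneg0 : ∀ T : Set ℂ, 0 ≤ ∫ y in T, f0 y := fun T => integral_nonneg fun y => (p0 y).le
  have nonneg1 : ∀ T : Set ℂ, 0 ≤ ∫ y in T, f1 y := fun T => integral_nonneg fun y => (p1 y).le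
  have D0 := divergence_ge_of_measurableSet p0 pY i0 iY hInt0 hS
  have D1 := divergence_ge_of_measurableSet p1 pY i1 iY hInt1 hS
  rw [mixS, mixS, compl0, compl1] at D0 D1
  rw [binEnt_sub_HNP hγ0 hγ1 (nonneg0 S) (by linarith [nonneg0 Sᶜ]) (nonneg1 Sᶜ)
    (by linarith [nonneg1 S]), chain, ent0, ent1]
  linarith [mul_le_mul_of_nonneg_left D0 (sub_pos.2 hγ1).le,
    mul_le_mul_of_nonneg_left D1 hγ0.le]
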